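/- Let H be a finite type, let p and q be probability vectors on H, let S be a finite subset of H, and let δ, ε be reals with δ > 0, ∑_{h ∈ S} p h ≥ δ, ∑ h, |p h − q h| ≤ ε, and ε < δ. Then ∑_{h ∈ S} q h > 0, and the statistical distance between the conditional distributions on S satisfies ∑_{h ∈ S} |p h / (∑_{h' ∈ S} p h') − q h / (∑_{h' ∈ S} q h')| ≤ 2 * ε / δ. (In the paper this is the claim, used in the proof that sequential equilibria lift to computational sequential equilibria, that if two outcome distributions are statistically close and a conditioning event has probability bounded below, then the conditional distributions are correspondingly close.) -/

import Mathlib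

/-!
Write `P` and `Q` for the masses of `S` under `p` and `q`. Changing the numerator before the
normalizing constant gives `p h / P - q h / Q = (p h - q h) / P + q h / Q * ((Q - P) / P)`. Since
the weights `q h / Q` sum to one and `|P - Q|` is at most the distance of `p` and `q` on `S`, each
of the two terms contributes at most that distance divided by `P`.
-/

section OrderedGroup

variable {ι G : Type*} [AddCommGroup G] [LinearOrder G] [IsOrderedAddMonoid G]

theorem abs_sum_sub_sum_le_sum_abs_sub (s : Finset ι) (f g : ι → G) :
    |∑ i ∈ s, f i - ∑ i ∈ s, g i| ≤ ∑ i ∈ s, |f i - g i| := by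
  rw [← Finset.sum_sub_distrib]
  exact Finset.abs_sum_le_sum_abs _ _

theorem sum_pos_of_sum_abs_sub_lt_sum {s : Finset ι} {f g : ι → G}
    (h : ∑ i ∈ s, |f i - g i| < ∑ i ∈ s, f i) : 0 < ∑ i ∈ s, g i := by
  have hsub : ∑ i ∈ s, f i - ∑ i ∈ s, g i < ∑ i ∈ s, f i :=
    ((le_abs_self _).trans (abs_sum_sub_sum_le_sum_abs_sub s f g)).trans_lt h
  exact (sub_lt_self_iff _).mp hsub

end OrderedGroup

section OrderedField

variable {ι K : Type*} [Field K] [LinearOrder K] [IsStrictOrderedRing K]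

theorem abs_div_sub_div_le (a b : K) {c d : K} (hc : c ≠ 0) (hd : d ≠ 0) :
    |a / c - b / d| ≤ |a - b| / |c| + |b / d| * (|c - d| / |c|) := by
  have hsplit : a / c - b / d = (a - b) / c + b / d * ((d - c) / c) := by
    field_simp
    ring
  calc |a / c - b / d| ≤ |(a - b) / c| + |b / d * ((d - c) / c)| := hsplit ▸ abs_add_le _ _
    _ = |a - b| / |c| + |b / d| * (|c - d| / |c|) := by
      rw [abs_mul, abs_div, abs_div (d - c), abs_sub_comm d c]

theorem sum_abs_div_sum_eq_one {s : Finset ι} {g : ι → K} (hg : ∀ i ∈ s, 0 ≤ g i)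
    (hsum : ∑ i ∈ s, g i ≠ 0) : ∑ i ∈ s, |g i / ∑ j ∈ s, g j| = 1 := by
  have habs : ∀ i ∈ s, |g i / ∑ j ∈ s, g j| = g i / ∑ j ∈ s, g j := fun i hi =>
    abs_of_nonneg (div_nonneg (hg i hi) (Finset.sum_nonneg hg))
  rw [Finset.sum_congr rfl habs, ← Finset.sum_div, div_self hsum]

theorem sum_abs_div_sum_sub_div_sum_le {s : Finset ι} {f g : ι → K} (hg : ∀ i ∈ s, 0 ≤ g i)
    (hf_sum : ∑ i ∈ s, f i ≠ 0) (hg_sum : ∑ i ∈ s, g i ≠ 0) :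
    ∑ i ∈ s, |f i / ∑ j ∈ s, f j - g i / ∑ j ∈ s, g j| ≤
      2 * (∑ i ∈ s, |f i - g i|) / |∑ i ∈ s, f i| := by
  have hmass := abs_sum_sub_sum_le_sum_abs_sub s f g
  have hweights := sum_abs_div_sum_eq_one hg hg_sum
  set F := ∑ i ∈ s, f i
  set G := ∑ i ∈ s, g i
  calc ∑ i ∈ s, |f i / F - g i / G|
      ≤ ∑ i ∈ s, (|f i - g i| / |F| + |g i / G| * (|F - G| / |F|)) :=
        Finset.sum_le_sum fun i _ => abs_div_sub_div_le (f i) (g i) hf_sum hg_sum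
    _ = (∑ i ∈ s, |f i - g i|) / |F| + |F - G| / |F| := by
      rw [Finset.sum_add_distrib, ← Finset.sum_div, ← Finset.sum_mul, hweights, one_mul]
    _ ≤ (∑ i ∈ s, |f i - g i|) / |F| + (∑ i ∈ s, |f i - g i|) / |F| := by gcongr
    _ = 2 * (∑ i ∈ s, |f i - g i|) / |F| := by ring

theorem conditional_statistical_distance_bound_general {p q : ι → K} {s : Finset ι} {δ ε : K}
    (hq : ∀ i ∈ s, 0 ≤ q i) (hδ : 0 < δ) (hs : δ ≤ ∑ i ∈ s, p i)
    (hclose : ∑ i ∈ s, |p i - q i| ≤ ε) (hεδ : ε < δ) :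
    0 < ∑ i ∈ s, q i ∧
      ∑ i ∈ s, |p i / ∑ j ∈ s, p j - q i / ∑ j ∈ s, q j| ≤ 2 * ε / δ := by
  have hp_pos : 0 < ∑ i ∈ s, p i := hδ.trans_le hs
  have hq_pos : 0 < ∑ i ∈ s, q i :=
    sum_pos_of_sum_abs_sub_lt_sum (hclose.trans_lt (hεδ.trans_le hs))
  have hε : 0 ≤ ε := (Finset.sum_nonneg fun _ _ => abs_nonneg _).trans hclose
  refine ⟨hq_pos, ?_⟩
  calc ∑ i ∈ s, |p i / ∑ j ∈ s, p j - q i / ∑ j ∈ s, q j|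
      ≤ 2 * (∑ i ∈ s, |p i - q i|) / |∑ i ∈ s, p i| :=
        sum_abs_div_sum_sub_div_sum_le hq hp_pos.ne' hq_pos.ne'
    _ = 2 * (∑ i ∈ s, |p i - q i|) / ∑ i ∈ s, p i := by rw [abs_of_pos hp_pos]
    _ ≤ 2 * ε / δ := by gcongr

end OrderedField

/-- If two probability vectors are statistically close and a conditioning event
has probability bounded below, the conditional distributions are close. -/
theorem conditional_statistical_distance_bound
    {H : Type*} [Fintype H] (p q : H → ℝ) (S : Finset H) (δ ε : ℝ)
    (hp0 : ∀ h, 0 ≤ p h) (hp1 : ∑ h, p h = 1)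
    (hq0 : ∀ h, 0 ≤ q h) (hq1 : ∑ h, q h = 1)
    (hδ : 0 < δ) (hS : δ ≤ ∑ h ∈ S, p h)
    (hclose : ∑ h, |p h - q h| ≤ ε) (hεδ : ε < δ) :
    0 < ∑ h ∈ S, q h ∧
      ∑ h ∈ S, |p h / (∑ h' ∈ S, p h') - q h / (∑ h' ∈ S, q h')| ≤ 2 * ε / δ :=
  conditional_statistical_distance_bound_general (fun h _ => hq0 h) hδ hS
    ((Finset.sum_le_univ_sum_of_nonneg fun _ => abs_nonneg _).trans hclose) hεδ
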